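/- arXiv:1806.09051 — 9 statements merged into one kernel-verified Lean document; each statement's English description precedes it below -/
import Mathlib

section
/- Let V and E be finite sets and s, t : E → V the source and target maps of a finite directed graph G (parallel edges allowed). Assume G is strongly connected, i.e., for any two vertices u, w there is a directed path in G from u to w. Let F_G denote the set of edges e ∈ E such that e is the unique edge of G with target t(e). If the subgraph (V, F_G) contains a directed cycle (a nonempty directed closed path all of whose edges lie in F_G), then F_G = E and G is itself a directed cycle; in particular every vertex of G is the target of exactly one edge and the source of exactly one edge. -/
/-!
Trace a directed path backwards from a vertex of a cycle in `F_G`: each edge met on the way is the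
only one entering its target, so it lies on the cycle. Strong connectivity therefore puts every
vertex on the cycle, and every vertex has exactly one incoming edge. Following incoming edges
backwards is then a self-map of `V` under which every vertex reaches every other one, and such a
map is a single finite cycle: iterating it from the image of a point returns to that point.
-/

section Iterate

open Function

variable {α : Type*} {f : α → α}

theorem exists_iterate_eq_of_reflTransGen {r : α → α → Prop} (hr : ∀ ⦃x y⦄, r x y → f y = x)
    {x y : α} (h : Relation.ReflTransGen r x y) : ∃ k, f^[k] y = x := by
  induction h using Relation.ReflTransGen.head_induction_on with
  | refl => exact ⟨0, rfl⟩
  | head hstep _ ih =>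
    obtain ⟨k, hk⟩ := ih
    exact ⟨k + 1, by rw [iterate_succ_apply', hk, hr hstep]⟩

theorem bijective_iterate_zmod_val {a : α} (ha : a ∈ periodicPts f)
    (hreach : ∀ x, ∃ k, f^[k] a = x) :
    Bijective fun i : ZMod (minimalPeriod f a) ↦ f^[i.val] a := by
  have : NeZero (minimalPeriod f a) := ⟨(minimalPeriod_pos_of_mem_periodicPts ha).ne'⟩
  refine ⟨fun i j hij ↦ ZMod.val_injective _ ?_, fun x ↦ ?_⟩
  · exact iterate_injOn_Iio_minimalPeriod (ZMod.val_lt i) (ZMod.val_lt j) hij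
  · obtain ⟨k, rfl⟩ := hreach x
    exact ⟨k, by simp only [ZMod.val_natCast, iterate_mod_minimalPeriod_eq]⟩

theorem iterate_zmod_val_add_one {a : α} (ha : a ∈ periodicPts f)
    (i : ZMod (minimalPeriod f a)) : f^[(i + 1).val] a = f (f^[i.val] a) := by
  have : NeZero (minimalPeriod f a) := ⟨(minimalPeriod_pos_of_mem_periodicPts ha).ne'⟩
  rw [← iterate_succ_apply' f, ZMod.val_add, ZMod.val_one_eq_one_mod, Nat.add_mod_mod,
    iterate_mod_minimalPeriod_eq]

theorem exists_zmod_equiv_apply_add_one [Nonempty α] (hreach : ∀ x y, ∃ k, f^[k] x = y) :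
    ∃ (n : ℕ) (_ : 0 < n) (w : ZMod n ≃ α), ∀ i, w (i + 1) = f (w i) := by
  obtain ⟨a⟩ := ‹Nonempty α›
  have ha : a ∈ periodicPts f := by
    obtain ⟨k, hk⟩ := hreach (f a) a
    exact ⟨k + 1, k.succ_pos, hk⟩
  exact ⟨minimalPeriod f a, minimalPeriod_pos_of_mem_periodicPts ha,
    .ofBijective _ (bijective_iterate_zmod_val ha (hreach a)), iterate_zmod_val_add_one ha⟩

end Iterate

section DirectedGraph

open Function

variable {V E : Type*}

/-- Strong connectivity of the directed multigraph with edge set `E`, source map `s` and target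
map `t`: a possibly empty directed path leads from any vertex to any other. -/
def IsStronglyConnected (s t : E → V) : Prop :=
  ∀ u w : V, Relation.ReflTransGen (fun x y : V ↦ ∃ e : E, s e = x ∧ t e = y) u w

/-- The set `F_G` of the edges that are the only incoming edge of their target. -/
def uniqueInEdges (t : E → V) : Set E :=
  {e : E | ∀ e' : E, t e' = t e → e' = e}

/-- The whole graph is a directed cycle: for some `n > 0`, edges and vertices can be indexed by
`ZMod n` so that the `i`-th edge leads from the `i`-th vertex to the next one. A loop at a single
vertex is the case `n = 1`. -/
def IsDirectedCycle (s t : E → V) : Prop :=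
  ∃ (n : ℕ) (_ : 0 < n) (c : ZMod n ≃ E) (w : ZMod n ≃ V),
    ∀ i, s (c i) = w i ∧ t (c i) = w (i + 1)

variable {s t : E → V}

theorem uniqueInEdges_eq_univ_iff : uniqueInEdges t = Set.univ ↔ Injective t :=
  Set.eq_univ_iff_forall.trans ⟨fun h _ e h' ↦ h e _ h', fun h _ _ h' ↦ h h'⟩

theorem IsDirectedCycle.bijective_source (h : IsDirectedCycle s t) : Bijective s := by
  obtain ⟨n, -, c, w, hcw⟩ := h
  have hs : s = c.symm.trans w := funext fun e ↦ by simpa using (hcw (c.symm e)).1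
  exact hs ▸ (c.symm.trans w).bijective

namespace IsStronglyConnected

theorem image_target_eq_univ (hconn : IsStronglyConnected s t) {C : Set E}
    (hC : C ⊆ uniqueInEdges t) (hne : C.Nonempty) (hpred : ∀ e ∈ C, s e ∈ t '' C) :
    t '' C = Set.univ := by
  obtain ⟨c₀, hc₀⟩ := hne
  refine Set.eq_univ_of_forall fun v ↦ ?_
  induction hconn v (t c₀) using Relation.ReflTransGen.head_induction_on with
  | refl => exact Set.mem_image_of_mem t hc₀
  | head hstep _ ih =>
    obtain ⟨e, rfl, rfl⟩ := hstep
    obtain ⟨c, hc, hce⟩ := ih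
    obtain rfl : e = c := hC hc e hce.symm
    exact hpred e hc

theorem bijective_target (hconn : IsStronglyConnected s t) {C : Set E}
    (hC : C ⊆ uniqueInEdges t) (hne : C.Nonempty) (hpred : ∀ e ∈ C, s e ∈ t '' C) :
    Bijective t := by
  have himage : ∀ v, v ∈ t '' C :=
    Set.eq_univ_iff_forall.1 (hconn.image_target_eq_univ hC hne hpred)
  refine ⟨fun e e' h ↦ ?_, fun v ↦ (himage v).imp fun _ ↦ And.right⟩
  obtain ⟨c, hc, hce'⟩ := himage (t e')
  exact (hC hc e (h.trans hce'.symm)).trans (hC hc e' hce'.symm).symm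

theorem isDirectedCycle [Nonempty V] (hconn : IsStronglyConnected s t) (ht : Bijective t) :
    IsDirectedCycle s t := by
  let inEdge : V ≃ E := (Equiv.ofBijective t ht).symm
  have htarget (v : V) : t (inEdge v) = v := (Equiv.ofBijective t ht).apply_symm_apply v
  have hinEdge (e : E) : inEdge (t e) = e := (Equiv.ofBijective t ht).symm_apply_apply e
  have hreach (v u : V) : ∃ k, (s ∘ inEdge)^[k] v = u := by
    refine exists_iterate_eq_of_reflTransGen ?_ (hconn u v)
    rintro _ _ ⟨e, rfl, rfl⟩
    rw [comp_apply, hinEdge]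
  obtain ⟨n, hn, w, hw⟩ := exists_zmod_equiv_apply_add_one hreach
  -- `w` runs backwards along the edges, so the cycle is traversed by `i ↦ w (-i)`.
  let w' : ZMod n ≃ V := (Equiv.neg _).trans w
  have hw' (i : ZMod n) : s (inEdge (w' (i + 1))) = w' i :=
    calc s (inEdge (w (-(i + 1)))) = w (-(i + 1) + 1) := (hw _).symm
      _ = w (-i) := by rw [neg_add, neg_add_cancel_right]
  exact ⟨n, hn, ((Equiv.addRight 1).trans w').trans inEdge, w', fun i ↦ ⟨hw' i, htarget _⟩⟩

end IsStronglyConnected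

theorem stmt0_general (hconn : IsStronglyConnected s t) {C : Set E}
    (hC : C ⊆ uniqueInEdges t) (hne : C.Nonempty) (hpred : ∀ e ∈ C, s e ∈ t '' C) :
    uniqueInEdges t = Set.univ ∧ IsDirectedCycle s t ∧
      (∀ v : V, ∃! e : E, t e = v) ∧ (∀ v : V, ∃! e : E, s e = v) := by
  have : Nonempty V := hne.to_type.map t
  have ht : Bijective t := hconn.bijective_target hC hne hpred
  have hcycle : IsDirectedCycle s t := hconn.isDirectedCycle ht
  exact ⟨uniqueInEdges_eq_univ_iff.2 ht.injective, hcycle, ht.existsUnique,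
    hcycle.bijective_source.existsUnique⟩

end DirectedGraph

/-- For a strongly connected finite directed graph `G` (vertex set `V`,
edge set `E`, source and target maps `s, t`), if the subgraph on the set `F_G` of
edges that are the unique incoming edge of their target contains a directed cycle,
then `F_G = E` and `G` is itself a directed cycle; in particular every vertex is
the target of exactly one edge and the source of exactly one edge. -/
theorem stmt0 {V E : Type*} [Fintype V] [Fintype E]
    (s t : E → V)
    (hconn : ∀ u w : V,
      Relation.ReflTransGen (fun x y : V => ∃ e : E, s e = x ∧ t e = y) u w)
    (FG : Set E) (hFG : FG = {e : E | ∀ e' : E, t e' = t e → e' = e})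
    (hcycle : ∃ (n : ℕ) (_ : 0 < n) (c : ZMod n → E),
      (∀ i, c i ∈ FG) ∧ ∀ i, t (c i) = s (c (i + 1))) :
    FG = Set.univ ∧
    (∃ (n : ℕ) (_ : 0 < n) (c : ZMod n ≃ E) (w : ZMod n ≃ V),
      ∀ i, s (c i) = w i ∧ t (c i) = w (i + 1)) ∧
    (∀ v : V, ∃! e : E, t e = v) ∧ (∀ v : V, ∃! e : E, s e = v) := by
  subst hFG
  obtain ⟨n, -, c, hc, hwalk⟩ := hcycle
  exact stmt0_general hconn (Set.range_subset_iff.2 hc) (Set.range_nonempty c)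
    (Set.forall_mem_range.2 fun i ↦ ⟨c (i - 1), ⟨_, rfl⟩, by rw [hwalk, sub_add_cancel]⟩)
end

section
/- Let G be a finite directed graph with vertex set V, edge set E and source and target maps s, t : E → V. Assume G is strongly connected and that G(V, F_G) is a tree, i.e., there is a vertex V₀ such that for every vertex v there is a unique directed path from V₀ to v consisting entirely of edges of F_G; write λ(v) for the length of this path and β(v) for the sum of the out-degrees in G of the λ(v)+1 vertices lying on this path (including V₀ and v). Call a vertex a leaf of the tree if it is not the source of any edge of F_G. If there exists an edge e ∈ E ∖ F_G with β(s(e)) = λ(s(e)) + card(E ∖ F_G), then there exists an edge e⊤ ∈ E ∖ F_G with β(s(e⊤)) = λ(s(e⊤)) + card(E ∖ F_G) such that s(e⊤) is a leaf of the tree. -/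
/-- A directed walk in the graph with source map `s` and target map `t`,
from a vertex, along a list of edges, to a vertex. -/
inductive IsWalk {V E : Type*} (s t : E → V) : V → List E → V → Prop
  | nil (v : V) : IsWalk s t v [] v
  | cons {u w : V} (e : E) {p : List E} (h : s e = u) (hp : IsWalk s t (t e) p w) :
      IsWalk s t u (e :: p) w

/- Write `F` for `F_G`. Every tree edge increases the level by `1` and `β` by a positive out-degree,
so `β v - λ v` does not decrease down the tree. It never exceeds `card (E ∖ F)`: the `F`-edges that
are not on the root path of `v` have distinct targets, none of them on that path, and each target
emits an edge, so at least `card F - λ v` edges start off the path, whereas `β v` counts those that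
start on it. Hence the equality `β v = λ v + card (E ∖ F)` passes from a vertex to its children, and
a vertex of largest level satisfying it is a leaf. -/

section SpanningTree

open Finset

variable {V E : Type*} {s t : E → V}

theorem IsWalk.concat {u : V} {p : List E} {e : E} (h : IsWalk s t u p (s e)) :
    IsWalk s t u (p ++ [e]) (t e) := by
  generalize hw : s e = w at h
  induction h with
  | nil v => exact .cons e hw (.nil _)
  | cons e' h' _ ih => exact .cons e' h' (ih hw)

theorem IsWalk.induction {P : V → Prop} {u w : V} {p : List E} (h : IsWalk s t u p w)
    (start : P u) (step : ∀ e ∈ p, P (s e) → P (t e)) : P w := by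
  induction h with
  | nil v => exact start
  | cons e h _ ih =>
    exact ih (step e List.mem_cons_self (h ▸ start))
      fun e' he' => step e' (List.mem_cons_of_mem _ he')

theorem IsWalk.exists_source_eq {v : V} {p : List E} {e : E} (h : IsWalk s t v p (s e)) :
    ∃ e', s e' = v := by
  cases h with
  | nil => exact ⟨e, rfl⟩
  | cons e' h' _ => exact ⟨e', h'⟩

/-- The edges of `F` form a spanning tree with root `r`, directed away from `r`: `path v` is the
unique walk from `r` to `v` with all edges in `F`. Its length is the level `λ v`. -/
structure IsSpanningTree (s t : E → V) (F : Set E) (r : V) (path : V → List E) : Prop where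
  mem_of_mem_path : ∀ v, ∀ e ∈ path v, e ∈ F
  isWalk_path : ∀ v, IsWalk s t r (path v) v
  eq_path : ∀ v p, (∀ e ∈ p, e ∈ F) → IsWalk s t r p v → p = path v

namespace IsSpanningTree

variable {F : Set E} {r : V} {path : V → List E}

theorem path_root (h : IsSpanningTree s t F r path) : path r = [] :=
  (h.eq_path r [] (by simp) (.nil r)).symm

theorem path_target (h : IsSpanningTree s t F r path) {e : E} (he : e ∈ F) :
    path (t e) = path (s e) ++ [e] := by
  refine (h.eq_path _ _ (fun e' he' => ?_) (h.isWalk_path (s e)).concat).symm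
  rcases List.mem_append.1 he' with he' | he'
  · exact h.mem_of_mem_path _ _ he'
  · rwa [List.mem_singleton.1 he']

theorem induction (h : IsSpanningTree s t F r path) {P : V → Prop} (root : P r)
    (step : ∀ e ∈ F, P (s e) → P (t e)) (v : V) : P v :=
  (h.isWalk_path v).induction root fun e he => step e (h.mem_of_mem_path v e he)

theorem target_ne_root (h : IsSpanningTree s t F r path) {e : E} (he : e ∈ F) : t e ≠ r := by
  intro hr
  simpa [hr, h.path_root] using h.path_target he

theorem injOn_target (h : IsSpanningTree s t F r path) : Set.InjOn t F := by
  intro a ha b hb hab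
  have hpath : path (s a) ++ [a] = path (s b) ++ [b] := by
    rw [← h.path_target ha, hab, h.path_target hb]
  simpa using (List.append_inj' hpath rfl).2

theorem path_target_prefix (h : IsSpanningTree s t F r path) {e : E} {v : V}
    (he : e ∈ path v) : path (t e) <+: path v := by
  induction v using h.induction with
  | root => simp [h.path_root] at he
  | step e' he' ih =>
    rw [h.path_target he'] at he
    rcases List.mem_append.1 he with he | he
    · exact (ih he).trans (h.path_target he' ▸ List.prefix_append _ _)
    · rw [List.mem_singleton.1 he]

theorem notMem_path_source (h : IsSpanningTree s t F r path) {e : E} (he : e ∈ F) :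
    e ∉ path (s e) := by
  intro hmem
  have hlen := (h.path_target_prefix hmem).length_le
  simp [h.path_target he] at hlen

theorem nodup_path (h : IsSpanningTree s t F r path) (v : V) : (path v).Nodup := by
  induction v using h.induction with
  | root => simp [h.path_root]
  | step e he ih =>
    rw [h.path_target he, ← List.concat_eq_append]
    exact ih.concat (h.notMem_path_source he)

theorem nodup_vertices (h : IsSpanningTree s t F r path) (v : V) :
    (r :: (path v).map t).Nodup := by
  refine List.nodup_cons.2 ⟨fun hr => ?_, (h.nodup_path v).map_on fun a ha b hb => ?_⟩
  · obtain ⟨e, he, hte⟩ := List.mem_map.1 hr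
    exact h.target_ne_root (h.mem_of_mem_path v e he) hte
  · exact fun hab => h.injOn_target (h.mem_of_mem_path v a ha) (h.mem_of_mem_path v b hb) hab

theorem mem_path_of_target_mem_vertices (h : IsSpanningTree s t F r path) {e : E} (he : e ∈ F)
    {v : V} (hv : t e ∈ r :: (path v).map t) : e ∈ path v := by
  obtain hr | ht := List.mem_cons.1 hv
  · exact absurd hr (h.target_ne_root he)
  · obtain ⟨e', he', hte⟩ := List.mem_map.1 ht
    rwa [← h.injOn_target (h.mem_of_mem_path v e' he') he hte]

end IsSpanningTree

variable [Fintype E] [DecidableEq V]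

/-- The out-degree of the vertex `v` in the graph whose edges have the sources `s`. -/
def outDegree (s : E → V) (v : V) : ℕ := #{e | s e = v}

/-- The sum of the out-degrees of the vertices visited by a walk `p` starting at `u`. For the path
from the root to `v` in a spanning tree this is `β v`. -/
def walkOutDegree (s t : E → V) (u : V) (p : List E) : ℕ :=
  outDegree s u + (p.map fun e => outDegree s (t e)).sum

theorem outDegree_pos (hs : s.Surjective) (v : V) : 0 < outDegree s v := by
  obtain ⟨e, he⟩ := hs v
  exact card_pos.2 ⟨e, by simp [he]⟩

theorem walkOutDegree_concat (u : V) (p : List E) (e : E) :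
    walkOutDegree s t u (p ++ [e]) = walkOutDegree s t u p + outDegree s (t e) := by
  simp [walkOutDegree, add_assoc]

theorem sum_map_outDegree {l : List V} (hl : l.Nodup) :
    (l.map (outDegree s)).sum = #{e | s e ∈ l} := by
  rw [← List.sum_toFinset _ hl, card_eq_sum_card_fiberwise (f := s) (t := l.toFinset)
    fun e he => by simpa using he]
  refine sum_congr rfl fun v hv => ?_
  rw [outDegree, filter_filter]
  congr 1 with e
  simp only [mem_filter, mem_univ, true_and]
  exact ⟨fun h => ⟨h ▸ List.mem_toFinset.1 hv, h⟩, And.right⟩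

namespace IsSpanningTree

variable {r : V} {path : V → List E}

theorem walkOutDegree_eq_card {F : Set E} (h : IsSpanningTree s t F r path) (v : V) :
    walkOutDegree s t r (path v) = #{e | s e ∈ r :: (path v).map t} := by
  rw [← sum_map_outDegree (h.nodup_vertices v)]
  simp [walkOutDegree, Function.comp_def]

variable {F : Finset E}

theorem card_le_card_source_notMem_add_length (h : IsSpanningTree s t F r path)
    (hs : s.Surjective) (v : V) :
    #F ≤ #{e | s e ∉ r :: (path v).map t} + (path v).length := by
  classical
  obtain ⟨out, hout⟩ := hs.hasRightInverse
  have hoff : #(F \ (path v).toFinset) ≤ #{e | s e ∉ r :: (path v).map t} := by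
    refine card_le_card_of_injOn (fun e => out (t e)) (fun e he => ?_) fun a ha b hb hab => ?_
    · obtain ⟨heF, hep⟩ := mem_sdiff.1 he
      refine mem_filter.2 ⟨mem_univ _, fun hmem => hep (List.mem_toFinset.2 ?_)⟩
      exact h.mem_path_of_target_mem_vertices heF (hout (t e) ▸ hmem)
    · exact h.injOn_target (mem_sdiff.1 ha).1 (mem_sdiff.1 hb).1 (hout.injective hab)
  calc #F ≤ #(F \ (path v).toFinset) + #(path v).toFinset := card_le_card_sdiff_add_card
    _ ≤ _ := add_le_add hoff (path v).toFinset_card_le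

variable [DecidableEq E]

theorem walkOutDegree_le (h : IsSpanningTree s t F r path) (hs : s.Surjective) (v : V) :
    walkOutDegree s t r (path v) ≤ (path v).length + #Fᶜ := by
  have hsource := card_filter_add_card_filter_not (s := univ)
    fun e => s e ∈ r :: (path v).map t
  have hedges : #F + #Fᶜ = #(univ : Finset E) := card_add_card_compl F
  have hF := h.card_le_card_source_notMem_add_length hs v
  rw [h.walkOutDegree_eq_card]
  omega

theorem walkOutDegree_target_eq (h : IsSpanningTree s t F r path) (hs : s.Surjective) {e : E}
    (he : e ∈ F) (hse : walkOutDegree s t r (path (s e)) = (path (s e)).length + #Fᶜ) :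
    walkOutDegree s t r (path (t e)) = (path (t e)).length + #Fᶜ := by
  refine (h.walkOutDegree_le hs (t e)).antisymm ?_
  have hpos := outDegree_pos hs (t e)
  rw [h.path_target he, walkOutDegree_concat, List.length_append, List.length_singleton]
  omega

end IsSpanningTree

theorem stmt1_general [DecidableEq E] {F : Finset E} {r : V} {path : V → List E}
    (h : IsSpanningTree s t F r path) (hs : s.Surjective) {v : V}
    (hv : walkOutDegree s t r (path v) = (path v).length + #Fᶜ) :
    ∃ e ∉ F, walkOutDegree s t r (path (s e)) = (path (s e)).length + #Fᶜ ∧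
      ∀ e' ∈ F, s e' ≠ s e := by
  obtain ⟨e₀, rfl⟩ := hs v
  obtain ⟨e, he, hmax⟩ := exists_max_image
    {e | walkOutDegree s t r (path (s e)) = (path (s e)).length + #Fᶜ}
    (fun e => (path (s e)).length) ⟨e₀, mem_filter.2 ⟨mem_univ _, hv⟩⟩
  have heq := (mem_filter.1 he).2
  have hleaf : ∀ e' ∈ F, s e' ≠ s e := by
    intro e' he' hse
    obtain ⟨e'', hchild⟩ := hs (t e')
    have heq' := h.walkOutDegree_target_eq hs he' (hse ▸ heq)
    have hle := hmax e'' (mem_filter.2 ⟨mem_univ _, hchild ▸ heq'⟩)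
    simp [hchild, h.path_target he', hse] at hle
  exact ⟨e, fun heF => hleaf e heF rfl, heq, hleaf⟩

end SpanningTree

/-- Lemma 4.1: Let `G` be a strongly connected finite directed graph
such that `G(V, F_G)` is a tree with root `V₀`: every vertex `v` is reached from `V₀`
by a unique directed `F_G`-path `f v`.  Write `λ v = (f v).length` and let `β v` be the
sum of the out-degrees in `G` of the vertices on this path.  If there is an edge
`e ∈ E ∖ F_G` with `β (s e) = λ (s e) + card (E ∖ F_G)`, then there is such an edge
whose source is a leaf of the tree. -/
theorem stmt1 {V E : Type*} [Fintype V] [Fintype E] [DecidableEq V] [DecidableEq E]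
    (s t : E → V)
    (hconn : ∀ u w : V, ∃ p : List E, IsWalk s t u p w)
    (FG : Finset E) (hFG : ∀ e : E, e ∈ FG ↔ ∀ e' : E, t e' = t e → e' = e)
    (V₀ : V) (f : V → List E)
    (hf : ∀ v : V, (∀ e ∈ f v, e ∈ FG) ∧ IsWalk s t V₀ (f v) v)
    (huniq : ∀ (v : V) (p : List E), (∀ e ∈ p, e ∈ FG) → IsWalk s t V₀ p v → p = f v)
    (outdeg : V → ℕ)
    (houtdeg : ∀ v : V, outdeg v = (Finset.univ.filter fun e : E => s e = v).card)
    (β : V → ℕ)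
    (hβ : ∀ v : V, β v = outdeg V₀ + ((f v).map fun e => outdeg (t e)).sum)
    (e : E) (he : e ∉ FG)
    (hbe : β (s e) = (f (s e)).length + FGᶜ.card) :
    ∃ etop : E, etop ∉ FG ∧ β (s etop) = (f (s etop)).length + FGᶜ.card ∧
      ∀ e' ∈ FG, s e' ≠ s etop := by
  obtain rfl : outdeg = outDegree s := funext houtdeg
  obtain rfl : β = fun v => walkOutDegree s t V₀ (f v) := funext hβ
  exact stmt1_general ⟨fun v => (hf v).1, fun v => (hf v).2, huniq⟩
    (fun v => (hconn v (s e)).elim fun _ hp => hp.exists_source_eq) hbe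
end

section
/- Let K, L, M be positive integers and set (as integers) τ = K + K·L, ν = K·L·M and I₅ = K + L + M. Then M = 1 if and only if (τ − ν)(I₅ − 1) = (τ − ν)² + ν. -/
/-!
The difference of the two sides factors as `K * (M - 1) * (1 - L * (L + M - (τ - ν)))`. If the last
factor vanishes, then `L` is a unit of `ℤ`, so `L = 1` unless `L = -1`. For `L = 1` what remains is
`(K + 1) * (2 - M) = 2`, which for positive `K` forces `K = M = 1`.
-/

section CommRing

variable {R : Type*} [CommRing R] {K L M τ ν I₅ : R}

theorem sub_mul_sub_one_sub_eq_mul (hτ : τ = K + K * L) (hν : ν = K * L * M)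
    (hI₅ : I₅ = K + L + M) :
    (τ - ν) * (I₅ - 1) - ((τ - ν) ^ 2 + ν) = K * (M - 1) * (1 - L * (L + M - (τ - ν))) := by
  subst hτ hν hI₅
  ring

theorem sub_mul_sub_one_eq_iff [NoZeroDivisors R] (hτ : τ = K + K * L) (hν : ν = K * L * M)
    (hI₅ : I₅ = K + L + M) :
    (τ - ν) * (I₅ - 1) = (τ - ν) ^ 2 + ν ↔
      (K = 0 ∨ M = 1) ∨ L * (L + M - (τ - ν)) = 1 := by
  rw [← sub_eq_zero, sub_mul_sub_one_sub_eq_mul hτ hν hI₅, mul_eq_zero, mul_eq_zero, sub_eq_zero,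
    sub_eq_zero, eq_comm (a := (1 : R))]

end CommRing

theorem eq_one_of_add_one_mul_two_sub_eq_two {K M : ℤ} (hK : 0 < K)
    (h : (K + 1) * (2 - M) = 2) : M = 1 := by
  have hK_le : K + 1 ≤ 2 := Int.le_of_dvd two_pos (Dvd.intro _ h)
  obtain rfl : K = 1 := by omega
  omega

theorem eq_one_of_mul_add_sub_eq_one {K L M τ ν : ℤ} (hK : 0 < K) (hL : L ≠ -1)
    (hτ : τ = K + K * L) (hν : ν = K * L * M) (h : L * (L + M - (τ - ν)) = 1) : M = 1 := by
  obtain rfl : L = 1 := (Int.eq_one_or_neg_one_of_mul_eq_one h).resolve_right hL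
  refine eq_one_of_add_one_mul_two_sub_eq_two hK ?_
  subst hτ hν
  linear_combination -h

theorem stmt2_general (K L M : ℤ) (hK : 0 < K) (hL : L ≠ -1)
    (τ ν I₅ : ℤ) (hτ : τ = K + K * L) (hν : ν = K * L * M) (hI₅ : I₅ = K + L + M) :
    M = 1 ↔ (τ - ν) * (I₅ - 1) = (τ - ν) ^ 2 + ν := by
  rw [sub_mul_sub_one_eq_iff hτ hν hI₅]
  constructor
  · exact fun hM => .inl (.inr hM)
  · rintro ((hK_zero | hM) | hunit)
    · exact absurd hK_zero hK.ne'
    · exact hM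
    · exact eq_one_of_mul_add_sub_eq_one hK hL hτ hν hunit

/-- Lemma 5.7: for positive integers `K, L, M`, with `τ = K + K*L`,
`ν = K*L*M`, `I₅ = K + L + M`, one has `M = 1` iff
`(τ - ν)*(I₅ - 1) = (τ - ν)^2 + ν`. -/
theorem stmt2 (K L M : ℤ) (hK : 0 < K) (hL : 0 < L) (hM : 0 < M)
    (τ ν I₅ : ℤ) (hτ : τ = K + K * L) (hν : ν = K * L * M) (hI₅ : I₅ = K + L + M) :
    M = 1 ↔ (τ - ν) * (I₅ - 1) = (τ - ν) ^ 2 + ν :=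
  stmt2_general K L M hK (by omega) τ ν I₅ hτ hν hI₅
end

section
/- Let K and L be positive integers and consider the integer quadratic polynomial q(X) = L(1 + K·L)·X² − (1 + K·L + 2K·L² + L − L²)·X + (K·L² + K·L + 1 − L²). Then q(1) = 0, and for every integer X ≥ 2 one has q(X) ≠ 0. -/
theorem add_one_le_mul_of_one_le_of_two_le {R : Type*} [Semiring R] [PartialOrder R]
    [IsOrderedRing R] {a b : R} (ha : 1 ≤ a) (hb : 2 ≤ b) : a + 1 ≤ a * b :=
  calc a + 1 ≤ a + a := by gcongr
    _ = a * 2 := (mul_two a).symm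
    _ ≤ a * b := mul_le_mul_of_nonneg_left hb (zero_le_one.trans ha)

/-- The quadratic `q(X)` with parameters `K` and `L`. For `τ = K + KL`, `ν = KLX` and
`I₅ = K + L + X`, the difference `(τ - ν)² + ν - (τ - ν)(I₅ - 1)` is `K * q(X)`. -/
def reducedQuadratic {R : Type*} [CommRing R] (K L X : R) : R :=
  L * (1 + K * L) * X ^ 2
    - (1 + K * L + 2 * K * L ^ 2 + L - L ^ 2) * X
    + (K * L ^ 2 + K * L + 1 - L ^ 2)

section CommRing

variable {R : Type*} [CommRing R]

-- The linear factor is expanded about `X = 1 + 1 / L`, where its value `L * (L + 1)` is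
-- positive: this is what places the second root below `1 + 1 / L`.
theorem reducedQuadratic_eq_mul (K L X : R) :
    reducedQuadratic K L X =
      (X - 1) * ((1 + K * L) * (L * X - (L + 1)) + L * (L + 1)) := by
  unfold reducedQuadratic
  ring

theorem reducedQuadratic_one (K L : R) : reducedQuadratic K L 1 = 0 := by
  rw [reducedQuadratic_eq_mul, sub_self, zero_mul]

end CommRing

section LinearOrder

variable {R : Type*} [CommRing R] [LinearOrder R] [IsStrictOrderedRing R] {K L X : R}

theorem reducedQuadratic_pos (hL : 0 < L) (hKL : 0 ≤ 1 + K * L) (hX : L + 1 ≤ L * X) :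
    0 < reducedQuadratic K L X := by
  have one_lt_X : 1 < X := by
    refine lt_of_mul_lt_mul_left ?_ hL.le
    calc L * 1 = L := mul_one L
      _ < L + 1 := lt_add_one L
      _ ≤ L * X := hX
  have linear_factor_pos : 0 < (1 + K * L) * (L * X - (L + 1)) + L * (L + 1) :=
    add_pos_of_nonneg_of_pos (mul_nonneg hKL (sub_nonneg.mpr hX)) (by positivity)
  rw [reducedQuadratic_eq_mul]
  exact mul_pos (sub_pos.mpr one_lt_X) linear_factor_pos

theorem stmt3_general (hL : 0 < L) (hKL : 0 ≤ 1 + K * L) :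
    reducedQuadratic K L 1 = 0 ∧ ∀ X : R, L + 1 ≤ L * X → 0 < reducedQuadratic K L X :=
  ⟨reducedQuadratic_one K L, fun _ hX => reducedQuadratic_pos hL hKL hX⟩

end LinearOrder

/-- for positive integers `K, L`, the quadratic
`q(X) = L(1 + KL)X² − (1 + KL + 2KL² + L − L²)X + (KL² + KL + 1 − L²)`
has `q(1) = 0` and no integer root `X ≥ 2`. -/
theorem stmt3 (K L : ℤ) (hK : 0 < K) (hL : 0 < L)
    (q : ℤ → ℤ)
    (hq : ∀ X : ℤ, q X = L * (1 + K * L) * X ^ 2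
        - (1 + K * L + 2 * K * L ^ 2 + L - L ^ 2) * X
        + (K * L ^ 2 + K * L + 1 - L ^ 2)) :
    q 1 = 0 ∧ ∀ X : ℤ, 2 ≤ X → q X ≠ 0 := by
  obtain rfl : q = reducedQuadratic K L := funext hq
  obtain ⟨root_one, pos⟩ := stmt3_general hL (show 0 ≤ 1 + K * L by positivity)
  exact ⟨root_one, fun X hX => (pos X (add_one_le_mul_of_one_le_of_two_le hL hX)).ne'⟩
end

section
/- Let K, L, M be positive integers with M ≥ 2 and set (as integers) τ = K + K·L, ν = K·L·M, I₅ = K + L + M, I₄⁰ = K² − K + K·L² + K·L·M² + K²·L·M, a = 1 + τ + I₅ and b = (ν − τ)(I₅ + 2) − 2τ − I₄⁰. Then 2·a·K + b ≥ 0. -/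
section

variable {R : Type*} [CommRing R] {K L M τ ν I₅ I₄0 a b : R}

-- The cofactor of `K` is expanded in `M - 2` and `K - 1`, so that its coefficients are polynomials
-- in `L` with nonnegative coefficients.
theorem two_mul_a_mul_k_add_b_eq
    (hτ : τ = K + K * L) (hν : ν = K * L * M) (hI₅ : I₅ = K + L + M)
    (hI₄0 : I₄0 = K ^ 2 - K + K * L ^ 2 + K * L * M ^ 2 + K ^ 2 * L * M)
    (ha : a = 1 + τ + I₅) (hb : b = (ν - τ) * (I₅ + 2) - 2 * τ - I₄0) :
    2 * a * K + b = K * ((M - 2) * (L ^ 2 + L + 1) + (K - 1) * (L + 2) + 3) := by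
  subst hb ha hI₄0 hI₅ hν hτ
  ring

theorem stmt7_general [PartialOrder R] [IsOrderedRing R]
    (hK : 1 ≤ K) (hL : 0 ≤ L) (hM : 2 ≤ M)
    (hτ : τ = K + K * L) (hν : ν = K * L * M) (hI₅ : I₅ = K + L + M)
    (hI₄0 : I₄0 = K ^ 2 - K + K * L ^ 2 + K * L * M ^ 2 + K ^ 2 * L * M)
    (ha : a = 1 + τ + I₅) (hb : b = (ν - τ) * (I₅ + 2) - 2 * τ - I₄0) :
    3 * K ≤ 2 * a * K + b := by
  have hM_part : 0 ≤ (M - 2) * (L ^ 2 + L + 1) :=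
    mul_nonneg (sub_nonneg.mpr hM) (add_nonneg (add_nonneg (pow_nonneg hL 2) hL) zero_le_one)
  have hK_part : 0 ≤ (K - 1) * (L + 2) :=
    mul_nonneg (sub_nonneg.mpr hK) (add_nonneg hL zero_le_two)
  calc
    3 * K = K * 3 := mul_comm 3 K
    _ ≤ K * ((M - 2) * (L ^ 2 + L + 1) + (K - 1) * (L + 2) + 3) :=
      mul_le_mul_of_nonneg_left (le_add_of_nonneg_left (add_nonneg hM_part hK_part))
        (zero_le_one.trans hK)
    _ = 2 * a * K + b := (two_mul_a_mul_k_add_b_eq hτ hν hI₅ hI₄0 ha hb).symm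

end

/-- for positive integers `K, L, M` with `M ≥ 2`, and `τ, ν, I₅, I₄⁰, a, b`
as in equation (5.17), one has `2aK + b ≥ 0`, i.e. `K` is the larger root of the
quadratic `aX² + bX + c`. -/
theorem stmt7 (K L M : ℤ) (hK : 0 < K) (hL : 0 < L) (hM : 0 < M) (hM2 : 2 ≤ M)
    (τ ν I₅ I₄0 a b : ℤ)
    (hτ : τ = K + K * L) (hν : ν = K * L * M) (hI₅ : I₅ = K + L + M)
    (hI₄0 : I₄0 = K ^ 2 - K + K * L ^ 2 + K * L * M ^ 2 + K ^ 2 * L * M)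
    (ha : a = 1 + τ + I₅) (hb : b = (ν - τ) * (I₅ + 2) - 2 * τ - I₄0) :
    0 ≤ 2 * a * K + b :=
  (mul_nonneg zero_le_three hK.le).trans <|
    stmt7_general (Order.one_le_iff_pos.mpr hK) hL.le hM2 hτ hν hI₅ hI₄0 ha hb
end

section
/- Let K, L, M be positive integers with M ≥ 2 and set (as integers) τ = K + K·L, ν = K·L·M, I₅ = K + L + M, I₄⁰ = K² − K + K·L² + K·L·M² + K²·L·M, a = 1 + τ + I₅, b = (ν − τ)(I₅ + 2) − 2τ − I₄⁰ and c = τ(2τ − ν). Then b² − 4ac ≥ 0 and, as real numbers, K = (−b + √(b² − 4ac)) / (2a); moreover L = (τ − K)/K and M = ν/(τ − K). -/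
/-!
The relations `K * L = τ - K` and `K * L * M = ν` eliminate `L` and `M` from `I₅` and from `I₄⁰`,
which yields two cubic equations for `K`, both monic. Their difference is the quadratic equation
`a * K ^ 2 + b * K + c = 0`. Here `a > 0`, and for `M ≥ 2` the derivative `2 * a * K + b` at `K`
is nonnegative, so `K` is the larger of the two roots.
-/

section CommRing

variable {R : Type*} [CommRing R] {K L M τ ν I₅ I₄0 : R}

theorem rootOutDegree_mul_leafOutDegree (hτ : τ = K + K * L) (hI₅ : I₅ = K + L + M) :
    K * M = K * I₅ - K ^ 2 - (τ - K) := by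
  rw [hτ, hI₅]
  ring

theorem rootOutDegree_cubic_of_periodFive
    (hτ : τ = K + K * L) (hν : ν = K * L * M) (hI₅ : I₅ = K + L + M) :
    K ^ 3 - (1 + τ + I₅) * K ^ 2 + (τ * (I₅ + 2) - ν) * K - τ ^ 2 = 0 := by
  have hKL : K * L = τ - K := eq_sub_of_add_eq' hτ.symm
  have hMν : K * M * (τ - K) = K * ν := by rw [hν, ← hKL]; ring
  rw [rootOutDegree_mul_leafOutDegree hτ hI₅] at hMν
  linear_combination hMν

theorem rootOutDegree_cubic_of_neutralPeriodFour
    (hτ : τ = K + K * L) (hν : ν = K * L * M) (hI₅ : I₅ = K + L + M)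
    (hI₄0 : I₄0 = K ^ 2 - K + K * L ^ 2 + K * L * M ^ 2 + K ^ 2 * L * M) :
    K ^ 3 + (ν * (I₅ + 1) - 2 * τ - I₄0) * K + τ * (τ - ν) = 0 := by
  have hKL : K * L = τ - K := eq_sub_of_add_eq' hτ.symm
  have hKI₄0 : K * I₄0 = K ^ 3 - K ^ 2 + (K * L) ^ 2 + K * M * ν + K ^ 2 * ν := by
    rw [hI₄0, hν]; ring
  rw [hKL, rootOutDegree_mul_leafOutDegree hτ hI₅] at hKI₄0
  linear_combination -hKI₄0

theorem rootOutDegree_quadratic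
    (hτ : τ = K + K * L) (hν : ν = K * L * M) (hI₅ : I₅ = K + L + M)
    (hI₄0 : I₄0 = K ^ 2 - K + K * L ^ 2 + K * L * M ^ 2 + K ^ 2 * L * M) :
    (1 + τ + I₅) * (K * K) + ((ν - τ) * (I₅ + 2) - 2 * τ - I₄0) * K + τ * (2 * τ - ν) = 0 := by
  linear_combination rootOutDegree_cubic_of_neutralPeriodFour hτ hν hI₅ hI₄0 -
    rootOutDegree_cubic_of_periodFive hτ hν hI₅

theorem deriv_quadratic_rootOutDegree_eq
    (hτ : τ = K + K * L) (hν : ν = K * L * M) (hI₅ : I₅ = K + L + M)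
    (hI₄0 : I₄0 = K ^ 2 - K + K * L ^ 2 + K * L * M ^ 2 + K ^ 2 * L * M) :
    2 * (1 + τ + I₅) * K + ((ν - τ) * (I₅ + 2) - 2 * τ - I₄0) =
      K * (1 + 2 * K + L * (K - 1) + (M - 2) * (1 + L + L ^ 2)) := by
  subst hτ hν hI₅ hI₄0
  ring

theorem deriv_quadratic_rootOutDegree_nonneg [PartialOrder R] [IsStrictOrderedRing R]
    (hK : 1 ≤ K) (hL : 0 ≤ L) (hM : 2 ≤ M)
    (hτ : τ = K + K * L) (hν : ν = K * L * M) (hI₅ : I₅ = K + L + M)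
    (hI₄0 : I₄0 = K ^ 2 - K + K * L ^ 2 + K * L * M ^ 2 + K ^ 2 * L * M) :
    0 ≤ 2 * (1 + τ + I₅) * K + ((ν - τ) * (I₅ + 2) - 2 * τ - I₄0) := by
  have : 0 ≤ K := zero_le_one.trans hK
  have : 0 ≤ K - 1 := sub_nonneg.2 hK
  have : 0 ≤ M - 2 := sub_nonneg.2 hM
  rw [deriv_quadratic_rootOutDegree_eq hτ hν hI₅ hI₄0]
  positivity

end CommRing

theorem eq_quadratic_formula_of_deriv_nonneg {a b c x : ℝ} (ha : a ≠ 0)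
    (hx : a * (x * x) + b * x + c = 0) (hderiv : 0 ≤ 2 * a * x + b) :
    x = (-b + √(discrim a b c)) / (2 * a) := by
  rw [discrim_eq_sq_of_quadratic_eq_zero hx, Real.sqrt_sq hderiv]
  field_simp
  ring

theorem stmt9_general {K L M τ ν I₅ I₄0 a b c : ℝ} (hK : 1 ≤ K) (hL : 0 < L) (hM : 2 ≤ M)
    (hτ : τ = K + K * L) (hν : ν = K * L * M) (hI₅ : I₅ = K + L + M)
    (hI₄0 : I₄0 = K ^ 2 - K + K * L ^ 2 + K * L * M ^ 2 + K ^ 2 * L * M)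
    (ha : a = 1 + τ + I₅) (hb : b = (ν - τ) * (I₅ + 2) - 2 * τ - I₄0)
    (hc : c = τ * (2 * τ - ν)) :
    0 ≤ b ^ 2 - 4 * a * c ∧ K = (-b + √(b ^ 2 - 4 * a * c)) / (2 * a) ∧
      L = (τ - K) / K ∧ M = ν / (τ - K) := by
  have hK₀ : 0 < K := zero_lt_one.trans_le hK
  have : 0 < M := zero_lt_two.trans_le hM
  have ha₀ : a ≠ 0 := by rw [ha, hτ, hI₅]; positivity
  have hroot : a * (K * K) + b * K + c = 0 := by
    rw [ha, hb, hc]; exact rootOutDegree_quadratic hτ hν hI₅ hI₄0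
  have hderiv : 0 ≤ 2 * a * K + b := by
    rw [ha, hb]; exact deriv_quadratic_rootOutDegree_nonneg hK hL.le hM hτ hν hI₅ hI₄0
  have hKL : τ - K = K * L := sub_eq_of_eq_add' hτ
  refine ⟨?_, eq_quadratic_formula_of_deriv_nonneg ha₀ hroot hderiv, ?_, ?_⟩
  · exact (sq_nonneg _).trans_eq (discrim_eq_sq_of_quadratic_eq_zero hroot).symm
  · rw [hKL, mul_div_cancel_left₀ L hK₀.ne']
  · rw [hKL, hν, mul_div_cancel_left₀ M (mul_pos hK₀ hL).ne']

/-- Lemma 5.11, equations (5.14)-(5.16): for positive integers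
`K, L, M` with `M ≥ 2` and `τ, ν, I₅, I₄⁰, a, b, c` as in the paper, one has
`b² − 4ac ≥ 0`, and as real numbers `K = (−b + √(b² − 4ac))/(2a)`,
`L = (τ − K)/K` and `M = ν/(τ − K)`. -/
theorem stmt9 (K L M : ℤ) (hK : 0 < K) (hL : 0 < L) (hM : 0 < M) (hM2 : 2 ≤ M)
    (τ ν I₅ I₄0 a b c : ℤ)
    (hτ : τ = K + K * L) (hν : ν = K * L * M) (hI₅ : I₅ = K + L + M)
    (hI₄0 : I₄0 = K ^ 2 - K + K * L ^ 2 + K * L * M ^ 2 + K ^ 2 * L * M)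
    (ha : a = 1 + τ + I₅) (hb : b = (ν - τ) * (I₅ + 2) - 2 * τ - I₄0)
    (hc : c = τ * (2 * τ - ν)) :
    0 ≤ b ^ 2 - 4 * a * c ∧
    (K : ℝ) = (-(b : ℝ) + Real.sqrt ((b : ℝ) ^ 2 - 4 * (a : ℝ) * (c : ℝ))) / (2 * (a : ℝ)) ∧
    (L : ℝ) = ((τ : ℝ) - (K : ℝ)) / (K : ℝ) ∧
    (M : ℝ) = (ν : ℝ) / ((τ : ℝ) - (K : ℝ)) := by
  subst hτ hν hI₅ hI₄0 ha hb hc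
  exact_mod_cast stmt9_general (K := K) (L := L) (M := M) (mod_cast hK) (mod_cast hL)
    (mod_cast hM2) rfl rfl rfl rfl rfl rfl rfl
end

section
/- Let K, L, M and K′, L′, M′ be positive integers. If K + K·L = K′ + K′·L′, K·L·M = K′·L′·M′, K + L + M = K′ + L′ + M′, and K² − K + K·L² + K·L·M² + K²·L·M = K′² − K′ + K′·L′² + K′·L′·M′² + K′²·L′·M′, then K = K′, L = L′ and M = M′. -/
/-!
Substituting the other three invariants into `I₄⁰` leaves `K² - (ν - τ)L` as an invariant. For fixed
`τ = K(1 + L)`, the out-degree `L` decreases when `K` increases, so if `τ ≤ ν` this quantity is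
strictly increasing in `K`, and its value determines `K`. If `ν < τ`, then `M = 1`, hence `ν = KL`
and `K = τ - ν`.
-/

/-- In the notation of the paper, `I₄⁰ = K² - (ν - τ)L + νI₅ - τ`. -/
theorem neutral_orbit_count_eq {R : Type*} [CommRing R] (k l m : R) :
    k ^ 2 - k + k * l ^ 2 + k * l * m ^ 2 + k ^ 2 * l * m =
      k ^ 2 - (k * l * m - (k + k * l)) * l + k * l * m * (k + l + m) - (k + k * l) := by
  ring

theorem lt_of_add_mul_eq_add_mul {R : Type*} [Semiring R] [LinearOrder R] [IsStrictOrderedRing R]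
    {a b c d : R} (hb : 0 ≤ b) (hc : 0 ≤ c) (h : a + a * b = c + c * d) (hac : a < c) :
    d < b := by
  by_contra! hbd
  have hmul : a * b ≤ c * d := mul_le_mul hac.le hbd hb hc
  exact (add_lt_add_of_lt_of_le hac hmul).ne h

section OrderedRing

variable {R : Type*} [Ring R] [LinearOrder R] [IsStrictOrderedRing R] {a b c d t : R}

theorem sq_sub_mul_lt_sq_sub_mul (ha : 0 ≤ a) (hb : 0 ≤ b) (ht : 0 ≤ t)
    (h : a + a * b = c + c * d) (hac : a < c) : a ^ 2 - t * b < c ^ 2 - t * d := by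
  have hdb : d < b := lt_of_add_mul_eq_add_mul hb (ha.trans hac.le) h hac
  have hsq : a ^ 2 < c ^ 2 := pow_lt_pow_left₀ hac ha two_ne_zero
  have hmul : t * d ≤ t * b := mul_le_mul_of_nonneg_left hdb.le ht
  calc
    a ^ 2 - t * b < c ^ 2 - t * b := sub_lt_sub_right hsq _
    _ ≤ c ^ 2 - t * d := sub_le_sub_left hmul _

theorem eq_of_add_mul_eq_of_sq_sub_mul_eq (ha : 0 ≤ a) (hb : 0 ≤ b) (hc : 0 ≤ c) (hd : 0 ≤ d)
    (ht : 0 ≤ t) (h : a + a * b = c + c * d) (hsq : a ^ 2 - t * b = c ^ 2 - t * d) : a = c := by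
  rcases lt_trichotomy a c with hac | hac | hca
  · exact absurd hsq (sq_sub_mul_lt_sq_sub_mul ha hb ht h hac).ne
  · exact hac
  · exact absurd hsq (sq_sub_mul_lt_sq_sub_mul hc hd ht h.symm hca).ne'

end OrderedRing

theorem le_one_of_mul_mul_lt_add_mul {a b c : ℕ} (hb : 0 < b) (h : a * b * c < a + a * b) :
    c ≤ 1 := by
  by_contra! hc
  refine h.not_ge ?_
  calc
    a + a * b ≤ a * b + a * b := by gcongr; exact Nat.le_mul_of_pos_right a hb
    _ = a * b * 2 := (mul_two _).symm
    _ ≤ a * b * c := Nat.mul_le_mul_left _ hc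

/-- algebraic content of Theorem 5.11 / Corollary 5.13(b): the
invariants `τ = K + KL`, `ν = KLM`, `I₅ = K + L + M` and
`I₄⁰ = K² − K + KL² + KLM² + K²LM` determine the triple `(K, L, M)` of positive
integers. -/
theorem stmt10 (K L M K' L' M' : ℕ)
    (hK : 0 < K) (hL : 0 < L) (hM : 0 < M)
    (hK' : 0 < K') (hL' : 0 < L') (hM' : 0 < M')
    (hτ : K + K * L = K' + K' * L')
    (hν : K * L * M = K' * L' * M')
    (hI₅ : K + L + M = K' + L' + M')
    (hI₄0 : K ^ 2 - K + K * L ^ 2 + K * L * M ^ 2 + K ^ 2 * L * M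
          = K' ^ 2 - K' + K' * L' ^ 2 + K' * L' * M' ^ 2 + K' ^ 2 * L' * M') :
    K = K' ∧ L = L' ∧ M = M' := by
  have hKK : K = K' := by
    rcases lt_or_ge (K * L * M) (K + K * L) with hlt | hle
    · have hM_one : M = 1 := (le_one_of_mul_mul_lt_add_mul hL hlt).antisymm hM
      rw [hν, hτ] at hlt
      have hM'_one : M' = 1 := (le_one_of_mul_mul_lt_add_mul hL' hlt).antisymm hM'
      subst hM_one hM'_one
      linarith only [hτ, hν]
    · have hK_le : K ≤ K ^ 2 := Nat.le_self_pow two_ne_zero K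
      have hK'_le : K' ≤ K' ^ 2 := Nat.le_self_pow two_ne_zero K'
      zify [hK_le, hK'_le] at hτ hν hI₅ hI₄0 hle
      rw [neutral_orbit_count_eq, neutral_orbit_count_eq, ← hτ, ← hν, ← hI₅] at hI₄0
      have hsq : (K : ℤ) ^ 2 - (K * L * M - (K + K * L)) * L =
          K' ^ 2 - (K * L * M - (K + K * L)) * L' :=
        add_right_cancel (sub_left_injective hI₄0)
      exact_mod_cast eq_of_add_mul_eq_of_sq_sub_mul_eq (by positivity) (by positivity)
        (by positivity) (by positivity) (sub_nonneg.2 hle) hτ hsq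
  subst hKK
  have hLL : L = L' := Nat.eq_of_mul_eq_mul_left hK (Nat.add_left_cancel hτ)
  subst hLL
  exact ⟨rfl, rfl, Nat.add_left_cancel hI₅⟩
end

section
/- Let K, L, M be positive integers and set (as integers) τ = K + K·L, ν = K·L·M, I₅ = K + L + M, I₄⁰ = K² − K + K·L² + K·L·M² + K²·L·M, a = 1 + τ + I₅, b = (ν − τ)(I₅ + 2) − 2τ − I₄⁰ and c = τ(2τ − ν). If (τ − ν)(I₅ − 1) = (τ − ν)² + ν, then M = 1, K = τ − ν and L·(τ − ν) = ν. If (τ − ν)(I₅ − 1) ≠ (τ − ν)² + ν, then M ≥ 2, b² − 4ac ≥ 0 and, as real numbers, K = (−b + √(b² − 4ac))/(2a), L = (τ − K)/K and M = ν/(τ − K). -/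
/-!
The case distinction detects `M = 1`, because
`(τ − ν)² + ν − (τ − ν)(I₅ − 1) = K(M − 1)(L² + LM − 1 + KL(L(M − 1) − 1))`,
whose last factor is positive for `L ≥ 1` and `M ≥ 2`.

Eliminating `L` and `M` with `KL = τ − K` and `M = I₅ − K − L`, the relation `ν = KLM` becomes a
monic cubic equation for `K`, and so does the formula for `I₄⁰`. The difference of the two is the
quadratic `aK² + bK + c = 0`. For `K ≥ 1` and `M ≥ 2` its derivative `2aK + b` is nonnegative at
`K`, so `K` is the larger root; the edge counts `τ` and `ν` then give `L` and `M`.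
-/

theorem eq_neg_add_sqrt_discrim_div {a b c x : ℝ} (ha : a ≠ 0)
    (hroot : a * (x * x) + b * x + c = 0) (hslope : 0 ≤ 2 * a * x + b) :
    x = (-b + √(discrim a b c)) / (2 * a) := by
  rw [discrim_eq_sq_of_quadratic_eq_zero hroot, Real.sqrt_sq hslope]
  field_simp
  ring

namespace MarkovDyck

section Invariants

variable {R : Type*} [CommRing R]

/-- The number `τ` of tree edges of the graph of height two with out-degrees `K`, `L`, `M` at the
root, at level one and at the leaves. Like the other invariants below, it is extended polynomially
to out-degrees in an arbitrary commutative ring. -/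
def treeEdges (K L : R) : R := K + K * L

/-- The number `ν` of non-tree edges. -/
def nonTreeEdges (K L M : R) : R := K * L * M

/-- The number `I₅` of periodic orbits of length 5 with a fixed multiplier of length one. -/
def unitMultiplierOrbits (K L M : R) : R := K + L + M

/-- The number `I₄⁰` of neutral periodic orbits of length 4. -/
def neutralOrbits (K L M : R) : R :=
  K ^ 2 - K + K * L ^ 2 + K * L * M ^ 2 + K ^ 2 * L * M

/-- The leading coefficient `a` of the quadratic for `K`; it depends on the out-degrees only
through the invariants, as do `linearCoeff` and `constantCoeff`. -/
def quadraticCoeff (K L M : R) : R := 1 + treeEdges K L + unitMultiplierOrbits K L M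

/-- The linear coefficient `b` of the quadratic for `K`. -/
def linearCoeff (K L M : R) : R :=
  (nonTreeEdges K L M - treeEdges K L) * (unitMultiplierOrbits K L M + 2)
    - 2 * treeEdges K L - neutralOrbits K L M

/-- The constant coefficient `c` of the quadratic for `K`. -/
def constantCoeff (K L M : R) : R :=
  treeEdges K L * (2 * treeEdges K L - nonTreeEdges K L M)

theorem treeEdges_sub_self (K L : R) : treeEdges K L - K = K * L :=
  add_sub_cancel_left K (K * L)

theorem cube_eq_of_nonTreeEdges (K L M : R) :
    K ^ 3 = quadraticCoeff K L M * K ^ 2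
      - (treeEdges K L * (unitMultiplierOrbits K L M + 2) - nonTreeEdges K L M) * K
      + treeEdges K L ^ 2 := by
  simp only [quadraticCoeff, treeEdges, unitMultiplierOrbits, nonTreeEdges]
  ring

theorem cube_eq_of_neutralOrbits (K L M : R) :
    K ^ 3 = (neutralOrbits K L M + 2 * treeEdges K L
        - nonTreeEdges K L M * (unitMultiplierOrbits K L M + 1)) * K
      + treeEdges K L * (nonTreeEdges K L M - treeEdges K L) := by
  simp only [neutralOrbits, treeEdges, unitMultiplierOrbits, nonTreeEdges]
  ring

theorem quadratic_eq_zero (K L M : R) :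
    quadraticCoeff K L M * (K * K) + linearCoeff K L M * K + constantCoeff K L M = 0 := by
  rw [linearCoeff, constantCoeff]
  linear_combination cube_eq_of_neutralOrbits K L M - cube_eq_of_nonTreeEdges K L M

theorem two_mul_quadraticCoeff_mul_add_linearCoeff (K L M : R) :
    2 * quadraticCoeff K L M * K + linearCoeff K L M =
      K * ((L ^ 2 + L) * (M - 2) + (K - 1) * (L + 2) + M + 1) := by
  simp only [quadraticCoeff, linearCoeff, treeEdges, nonTreeEdges, unitMultiplierOrbits,
    neutralOrbits]
  ring

theorem criterion_defect_eq (K L M : R) :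
    (treeEdges K L - nonTreeEdges K L M) ^ 2 + nonTreeEdges K L M
        - (treeEdges K L - nonTreeEdges K L M) * (unitMultiplierOrbits K L M - 1) =
      K * (M - 1) * (L ^ 2 + L * M - 1 + K * L * (L * (M - 1) - 1)) := by
  simp only [treeEdges, nonTreeEdges, unitMultiplierOrbits]
  ring

end Invariants

section Order

variable {R : Type*} [CommRing R] [LinearOrder R] [IsStrictOrderedRing R] {K L M : R}

theorem quadraticCoeff_pos (hK : 0 ≤ K) (hL : 0 ≤ L) (hM : 0 ≤ M) :
    0 < quadraticCoeff K L M := by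
  unfold quadraticCoeff treeEdges unitMultiplierOrbits
  positivity

theorem two_mul_quadraticCoeff_mul_add_linearCoeff_nonneg (hK : 1 ≤ K) (hL : 0 ≤ L) (hM : 2 ≤ M) :
    0 ≤ 2 * quadraticCoeff K L M * K + linearCoeff K L M := by
  have hL_term : 0 ≤ (L ^ 2 + L) * (M - 2) := mul_nonneg (by positivity) (sub_nonneg.2 hM)
  have hK_term : 0 ≤ (K - 1) * (L + 2) := mul_nonneg (sub_nonneg.2 hK) (by positivity)
  rw [two_mul_quadraticCoeff_mul_add_linearCoeff]
  exact mul_nonneg (zero_le_one.trans hK) (by linarith)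

theorem criterion_iff_eq_one (hK : 0 < K) (hL : 1 ≤ L) (hM : M = 1 ∨ 2 ≤ M) :
    (treeEdges K L - nonTreeEdges K L M) * (unitMultiplierOrbits K L M - 1) =
        (treeEdges K L - nonTreeEdges K L M) ^ 2 + nonTreeEdges K L M ↔ M = 1 := by
  rw [eq_comm, ← sub_eq_zero, criterion_defect_eq]
  refine ⟨fun hzero => hM.resolve_right fun hM₂ => ?_, fun hM₁ => by simp [hM₁]⟩
  have hL₀ : 0 < L := zero_lt_one.trans_le hL
  have hM₁ : 1 ≤ M - 1 := by linarith
  have hconst : 0 < L ^ 2 + L * M - 1 := by nlinarith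
  have hlinear : 0 ≤ L * (M - 1) - 1 := sub_nonneg.2 (one_le_mul_of_one_le_of_one_le hL hM₁)
  have hdefect : 0 < K * (M - 1) * (L ^ 2 + L * M - 1 + K * L * (L * (M - 1) - 1)) :=
    mul_pos (mul_pos hK (zero_lt_one.trans_le hM₁))
      (add_pos_of_pos_of_nonneg hconst (mul_nonneg (mul_pos hK hL₀).le hlinear))
  exact hdefect.ne' hzero

end Order

section Field

variable {F : Type*} [Field F] {K L : F}

theorem eq_treeEdges_sub_div (hK : K ≠ 0) : L = (treeEdges K L - K) / K := by
  rw [treeEdges_sub_self, mul_div_cancel_left₀ L hK]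

theorem eq_nonTreeEdges_div (hK : K ≠ 0) (hL : L ≠ 0) (M : F) :
    M = nonTreeEdges K L M / (treeEdges K L - K) := by
  rw [treeEdges_sub_self, nonTreeEdges, mul_div_cancel_left₀ M (mul_ne_zero hK hL)]

end Field

theorem eq_larger_root {K L M : ℝ} (hK : 1 ≤ K) (hL : 0 ≤ L) (hM : 2 ≤ M) :
    K = (-linearCoeff K L M
        + √(discrim (quadraticCoeff K L M) (linearCoeff K L M) (constantCoeff K L M)))
      / (2 * quadraticCoeff K L M) :=
  eq_neg_add_sqrt_discrim_div (quadraticCoeff_pos (by linarith) hL (by linarith)).ne'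
    (quadratic_eq_zero K L M)
    (two_mul_quadraticCoeff_mul_add_linearCoeff_nonneg hK hL hM)

end MarkovDyck

open MarkovDyck in
theorem stmt11_general (K L M : ℝ) (hK : 1 ≤ K) (hL : 1 ≤ L) (hM : M = 1 ∨ 2 ≤ M)
    (τ ν I₅ I₄0 a b c : ℝ)
    (hτ : τ = K + K * L) (hν : ν = K * L * M) (hI₅ : I₅ = K + L + M)
    (hI₄0 : I₄0 = K ^ 2 - K + K * L ^ 2 + K * L * M ^ 2 + K ^ 2 * L * M)
    (ha : a = 1 + τ + I₅) (hb : b = (ν - τ) * (I₅ + 2) - 2 * τ - I₄0)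
    (hc : c = τ * (2 * τ - ν)) :
    ((τ - ν) * (I₅ - 1) = (τ - ν) ^ 2 + ν →
      M = 1 ∧ K = τ - ν ∧ L * (τ - ν) = ν) ∧
    ((τ - ν) * (I₅ - 1) ≠ (τ - ν) ^ 2 + ν →
      2 ≤ M ∧ 0 ≤ b ^ 2 - 4 * a * c ∧
      K = (-b + √(b ^ 2 - 4 * a * c)) / (2 * a) ∧
      L = (τ - K) / K ∧
      M = ν / (τ - K)) := by
  have hK₀ : 0 < K := zero_lt_one.trans_le hK
  have hL₀ : 0 < L := zero_lt_one.trans_le hL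
  have hcriterion : (τ - ν) * (I₅ - 1) = (τ - ν) ^ 2 + ν ↔ M = 1 := by
    subst hτ hν hI₅
    exact criterion_iff_eq_one hK₀ hL hM
  rw [Ne, hcriterion]
  subst hτ hν hI₅ hI₄0 ha hb hc
  refine ⟨fun hM₁ => ⟨hM₁, ?_, ?_⟩, fun hM₁ => ?_⟩
  · rw [hM₁]
    ring
  · rw [hM₁]
    ring
  · have hM₂ : 2 ≤ M := hM.resolve_left hM₁
    have hdiscrim := discrim_eq_sq_of_quadratic_eq_zero (quadratic_eq_zero K L M)
    exact ⟨hM₂, (sq_nonneg _).trans_eq hdiscrim.symm, eq_larger_root hK hL₀.le hM₂,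
      eq_treeEdges_sub_div hK₀.ne', eq_nonTreeEdges_div hK₀.ne' hL₀.ne' M⟩

/-- Theorem 5.11/5.12: reconstruction of the out-degrees `K, L, M`
from the invariants `τ, ν, I₅, I₄⁰`.  If `(τ − ν)(I₅ − 1) = (τ − ν)² + ν` then
`M = 1`, `K = τ − ν` and `L(τ − ν) = ν`; otherwise `M ≥ 2`, `b² − 4ac ≥ 0` and,
as real numbers, `K = (−b + √(b² − 4ac))/(2a)`, `L = (τ − K)/K`, `M = ν/(τ − K)`. -/
theorem stmt11 (K L M : ℤ) (hK : 0 < K) (hL : 0 < L) (hM : 0 < M)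
    (τ ν I₅ I₄0 a b c : ℤ)
    (hτ : τ = K + K * L) (hν : ν = K * L * M) (hI₅ : I₅ = K + L + M)
    (hI₄0 : I₄0 = K ^ 2 - K + K * L ^ 2 + K * L * M ^ 2 + K ^ 2 * L * M)
    (ha : a = 1 + τ + I₅) (hb : b = (ν - τ) * (I₅ + 2) - 2 * τ - I₄0)
    (hc : c = τ * (2 * τ - ν)) :
    ((τ - ν) * (I₅ - 1) = (τ - ν) ^ 2 + ν →
      M = 1 ∧ K = τ - ν ∧ L * (τ - ν) = ν) ∧
    ((τ - ν) * (I₅ - 1) ≠ (τ - ν) ^ 2 + ν →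
      2 ≤ M ∧ 0 ≤ b ^ 2 - 4 * a * c ∧
      (K : ℝ) = (-(b : ℝ) + Real.sqrt ((b : ℝ) ^ 2 - 4 * (a : ℝ) * (c : ℝ))) / (2 * (a : ℝ)) ∧
      (L : ℝ) = ((τ : ℝ) - (K : ℝ)) / (K : ℝ) ∧
      (M : ℝ) = (ν : ℝ) / ((τ : ℝ) - (K : ℝ))) := by
  have hM_gap : M = 1 ∨ 2 ≤ M := by omega
  exact_mod_cast stmt11_general K L M (by exact_mod_cast hK) (by exact_mod_cast hL)
    (by exact_mod_cast hM_gap) τ ν I₅ I₄0 a b c (by exact_mod_cast hτ) (by exact_mod_cast hν)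
    (by exact_mod_cast hI₅) (by exact_mod_cast hI₄0) (by exact_mod_cast ha)
    (by exact_mod_cast hb) (by exact_mod_cast hc)
end

section
/- Let K be a positive integer and let L, M, L′, M′ be positive integers. For positive integers x, y set I₉(x, y) = K(K² + 3Kx + 2Ky + 7xy + 2x² + 2y²) + x(x² + 3xy + 2y²) + y³ and I₁₀(x, y) = K² + x² + y² + 3Kx + 3xy + 3Ky. If L + M = L′ + M′, I₉(L, M) = I₉(L′, M′) and I₁₀(L, M) = I₁₀(L′, M′), then L = L′ and M = M′. -/
/-!
For fixed `K`, the count `I₁₀` is a function of `x + y` alone plus `x * y`, so equal values of `I₅`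
and `I₁₀` force equal sums and equal products, and hence equality up to order. The order is detected
by `I₉`, since `I₉(x, y) - I₉(y, x) = (x - y) * (K ^ 2 + x * y)`.
-/

section CommSemiring

variable {R : Type*} [CommSemiring R]

/-- The count `I₉` of periodic orbits of length `9` with multiplier `ê`, as a polynomial in the
out-degrees `K` of the root, `x` of the level-one vertex and `y` of the source of `e`. Allowing any
commutative semiring lets it be transported from `ℕ` to a ring, where values can be subtracted. -/
def orbitCountNine (K x y : R) : R :=
  K * (K ^ 2 + 3 * K * x + 2 * K * y + 7 * x * y + 2 * x ^ 2 + 2 * y ^ 2)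
    + x * (x ^ 2 + 3 * x * y + 2 * y ^ 2) + y ^ 3

/-- The count `I₁₀` of periodic orbits of length `10` with multiplier `ê`, with the same encoding
as `orbitCountNine`. -/
def orbitCountTen (K x y : R) : R :=
  K ^ 2 + x ^ 2 + y ^ 2 + 3 * K * x + 3 * x * y + 3 * K * y

@[norm_cast]
theorem cast_orbitCountNine (K x y : ℕ) :
    ((orbitCountNine K x y : ℕ) : R) = orbitCountNine (K : R) x y := by
  simp [orbitCountNine]

@[norm_cast]
theorem cast_orbitCountTen (K x y : ℕ) :
    ((orbitCountTen K x y : ℕ) : R) = orbitCountTen (K : R) x y := by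
  simp [orbitCountTen]

theorem orbitCountTen_eq_add_mul (K x y : R) :
    orbitCountTen K x y = (x + y) ^ 2 + 3 * K * (x + y) + K ^ 2 + x * y := by
  unfold orbitCountTen
  ring

theorem mul_eq_mul_of_orbitCountTen_eq [IsLeftCancelAdd R] {K x y x' y' : R}
    (hadd : x + y = x' + y') (hten : orbitCountTen K x y = orbitCountTen K x' y') :
    x * y = x' * y' := by
  rw [orbitCountTen_eq_add_mul, orbitCountTen_eq_add_mul, hadd] at hten
  exact add_left_cancel hten

end CommSemiring

section CommRing

variable {R : Type*} [CommRing R]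

theorem orbitCountNine_sub_swap (K x y : R) :
    orbitCountNine K x y - orbitCountNine K y x = (x - y) * (K ^ 2 + x * y) := by
  unfold orbitCountNine
  ring

variable [NoZeroDivisors R]

theorem eq_of_orbitCountNine_eq_swap {K x y : R} (hne : K ^ 2 + x * y ≠ 0)
    (hnine : orbitCountNine K x y = orbitCountNine K y x) : x = y := by
  have hfactor : (x - y) * (K ^ 2 + x * y) = 0 := by
    rw [← orbitCountNine_sub_swap, hnine, sub_self]
  exact sub_eq_zero.mp ((mul_eq_zero.mp hfactor).resolve_right hne)

theorem eq_and_eq_or_eq_and_eq_of_add_eq_add_of_mul_eq_mul {x y x' y' : R}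
    (hadd : x + y = x' + y') (hmul : x * y = x' * y') :
    x = x' ∧ y = y' ∨ x = y' ∧ y = x' := by
  -- `x` is a root of the quadratic polynomial with roots `x'` and `y'`.
  have hroot : (x - x') * (x - y') = 0 := by linear_combination x * hadd - hmul
  rcases mul_eq_zero.mp hroot with hx | hx
  · exact .inl ⟨sub_eq_zero.mp hx, by linear_combination hadd - hx⟩
  · exact .inr ⟨sub_eq_zero.mp hx, by linear_combination hadd - hx⟩

theorem stmt12_general {K x y x' y' : R} (hne : K ^ 2 + x * y ≠ 0)
    (hadd : x + y = x' + y')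
    (hnine : orbitCountNine K x y = orbitCountNine K x' y')
    (hten : orbitCountTen K x y = orbitCountTen K x' y') :
    x = x' ∧ y = y' := by
  have hmul := mul_eq_mul_of_orbitCountTen_eq hadd hten
  rcases eq_and_eq_or_eq_and_eq_of_add_eq_add_of_mul_eq_mul hadd hmul with h | ⟨rfl, rfl⟩
  · exact h
  · have hxy := eq_of_orbitCountNine_eq_swap hne hnine
    exact ⟨hxy, hxy.symm⟩

end CommRing

/-- algebraic content of Theorem 5.6: with the root out-degree `K`
fixed, the invariants `I₅ = K + L + M`,
`I₉ = K(K² + 3KL + 2KM + 7LM + 2L² + 2M²) + L(L² + 3LM + 2M²) + M³` and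
`I₁₀ = K² + L² + M² + 3KL + 3LM + 3KM` determine the pair `(L, M)` of positive
integers. -/
theorem stmt12 (K L M L' M' : ℕ)
    (hK : 0 < K) (hL : 0 < L) (hM : 0 < M) (hL' : 0 < L') (hM' : 0 < M')
    (I₉ I₁₀ : ℕ → ℕ → ℕ)
    (hI₉ : ∀ x y : ℕ, I₉ x y =
      K * (K ^ 2 + 3 * K * x + 2 * K * y + 7 * x * y + 2 * x ^ 2 + 2 * y ^ 2)
        + x * (x ^ 2 + 3 * x * y + 2 * y ^ 2) + y ^ 3)
    (hI₁₀ : ∀ x y : ℕ, I₁₀ x y =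
      K ^ 2 + x ^ 2 + y ^ 2 + 3 * K * x + 3 * x * y + 3 * K * y)
    (h5 : L + M = L' + M')
    (h9 : I₉ L M = I₉ L' M')
    (h10 : I₁₀ L M = I₁₀ L' M') :
    L = L' ∧ M = M' := by
  obtain ⟨rfl, rfl⟩ : I₉ = orbitCountNine K ∧ I₁₀ = orbitCountTen K :=
    ⟨funext₂ hI₉, funext₂ hI₁₀⟩
  exact_mod_cast stmt12_general (R := ℤ) (K := K) (x := L) (y := M) (x' := L') (y' := M')
    (by positivity) (mod_cast h5) (mod_cast h9) (mod_cast h10)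
end
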